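/- The double exponential generating function of the numbers L_{S_1,S_2}(n,k) of n x k (S_1,S_2)-restricted lonesum matrices without all-zero rows and columns is sum_{n,k} L_{S_1,S_2}(n,k) x^n y^k/(n! k!) = 1/(1 - E_{S_1}(x) E_{S_2}(y)). -/

import Mathlib

open scoped Classical

/-- The `S`-restricted Stirling number of the second kind: the number of partitions of
`[n]` into exactly `k` nonempty blocks, all of whose sizes lie in `S`. -/
noncomputable def sStirling (S : Set ℕ) (n k : ℕ) : ℕ :=
  Nat.card {P : Finpartition (Finset.univ : Finset (Fin n)) //
    P.parts.card = k ∧ ∀ b ∈ P.parts, b.card ∈ S}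

/-- The formal power series `E_S(x) = ∑_{s ∈ S} x^s / s!`. -/
noncomputable def ES (S : Set ℕ) : PowerSeries ℚ :=
  PowerSeries.mk fun n => if n ∈ S then ((n.factorial : ℚ))⁻¹ else 0

/-- A 0-1 matrix (with entries in `Bool`) is lonesum iff it avoids both `2×2`
permutation matrices as submatrices. -/
def IsLonesum {n k : ℕ} (M : Fin n → Fin k → Bool) : Prop :=
  ∀ i₁ i₂ : Fin n, ∀ j₁ j₂ : Fin k, i₁ ≠ i₂ → j₁ ≠ j₂ →
    ¬(M i₁ j₁ = true ∧ M i₂ j₂ = true ∧ M i₁ j₂ = false ∧ M i₂ j₁ = false)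


/-- The formal power series `E_S` in the variable `i` of a two-variable power series
ring: the coefficient of a monomial is `1/s!` if the monomial is `x_i^s` with `s ∈ S`. -/
noncomputable def ESmv (S : Set ℕ) (i : Fin 2) : MvPowerSeries (Fin 2) ℚ :=
  fun d => if d = Finsupp.single i (d i) ∧ d i ∈ S then ((d i).factorial : ℚ)⁻¹ else 0

/-- The number of `n × k` `(S₁,S₂)`-restricted lonesum matrices without all-zero rows
and columns. -/
noncomputable def lonesumCount (S₁ S₂ : Set ℕ) (n k : ℕ) : ℕ :=
  Nat.card {M : Fin n → Fin k → Bool // IsLonesum M ∧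
    (∀ i, ∃ j, M i j = true) ∧ (∀ j, ∃ i, M i j = true) ∧
    (∀ i : Fin n, Nat.card {i' : Fin n // M i' = M i} ∈ S₁) ∧
    (∀ j : Fin k, Nat.card {j' : Fin k // (fun i => M i j') = fun i => M i j} ∈ S₂)}

/-- The double exponential generating function of the matrix counts. -/
noncomputable def lonesumDEGF (S₁ S₂ : Set ℕ) : MvPowerSeries (Fin 2) ℚ :=
  fun d => (lonesumCount S₁ S₂ (d 0) (d 1) : ℚ) / ((d 0).factorial * (d 1).factorial)

/-!
The rows of a lonesum matrix, read as sets of columns, form a chain, and so do its columns. Without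
all-zero columns the greatest row is full, and the least column is supported exactly on the set `A`
of full rows. Let `B` be the set of columns equal to it. Deleting `A` and `B` leaves an arbitrary
smaller matrix of the same kind, and the deleted rows and columns form one row type and one column
type. Hence a nonempty matrix amounts to a choice of `A` with `|A| ∈ S₁`, of `B` with `|B| ∈ S₂`,
and of a smaller matrix, so the double exponential generating function `L` satisfies
`L = 1 + E_{S₁}(x) E_{S₂}(y) L`.
-/

open Finset Function
open scoped Nat

section DoubleEGF

variable {K : Type*} [Field K]

/-- The double exponential generating function `∑ a(n, k) xⁿ yᵏ / (n! k!)` of a double sequence,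
as a power series in the two variables `x = X 0` and `y = X 1`. -/
noncomputable def doubleEGF (a : ℕ → ℕ → K) : MvPowerSeries (Fin 2) K :=
  fun d => a (d 0) (d 1) / ((d 0)! * (d 1)!)

theorem coeff_doubleEGF (a : ℕ → ℕ → K) (d : Fin 2 →₀ ℕ) :
    MvPowerSeries.coeff d (doubleEGF a) = a (d 0) (d 1) / ((d 0)! * (d 1)!) :=
  rfl

theorem doubleEGF_add (a b : ℕ → ℕ → K) :
    doubleEGF (fun n k => a n k + b n k) = doubleEGF a + doubleEGF b := by
  ext d
  simp only [map_add, coeff_doubleEGF, add_div]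

theorem doubleEGF_ite_eq_one :
    doubleEGF (fun n k => if n = 0 ∧ k = 0 then (1 : K) else 0) = 1 := by
  ext d
  have hd : d = 0 ↔ d 0 = 0 ∧ d 1 = 0 := by simp [Finsupp.ext_iff, Fin.forall_fin_two]
  rw [coeff_doubleEGF, MvPowerSeries.coeff_one, if_congr hd rfl rfl]
  split_ifs with h <;> simp [h]

theorem sum_antidiagonal_finsupp_fin_two {M : Type*} [AddCommMonoid M] (d : Fin 2 →₀ ℕ)
    (f : ℕ × ℕ → ℕ × ℕ → M) :
    ∑ p ∈ antidiagonal d, f (p.1 0, p.2 0) (p.1 1, p.2 1) =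
      ∑ x ∈ antidiagonal (d 0), ∑ y ∈ antidiagonal (d 1), f x y := by
  rw [← sum_product']
  refine sum_bij' (fun p _ => ((p.1 0, p.2 0), (p.1 1, p.2 1)))
    (fun q _ => (Finsupp.equivFunOnFinite.symm ![q.1.1, q.2.1],
      Finsupp.equivFunOnFinite.symm ![q.1.2, q.2.2])) ?_ ?_ ?_ ?_ fun _ _ => rfl <;>
    simp +contextual [Finsupp.ext_iff, Prod.ext_iff, Fin.forall_fin_two]

theorem sum_finset_apply_card_card_compl {ι M : Type*} [Fintype ι] [DecidableEq ι]
    [AddCommMonoid M] (f : ℕ → ℕ → M) :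
    ∑ A : Finset ι, f #A #Aᶜ =
      ∑ p ∈ antidiagonal (Fintype.card ι), (Fintype.card ι).choose p.1 • f p.1 p.2 := by
  simp only [card_compl]
  rw [← powerset_univ, sum_powerset_apply_card (fun m => f m (Fintype.card ι - m)), card_univ,
    Nat.sum_antidiagonal_eq_sum_range_succ_mk]

theorem doubleEGF_mul [CharZero K] (a b : ℕ → ℕ → K) :
    doubleEGF a * doubleEGF b = doubleEGF fun n k =>
      ∑ A : Finset (Fin n), ∑ B : Finset (Fin k), a #A #B * b #Aᶜ #Bᶜ := by
  ext d
  have sum_subsets : ∑ A : Finset (Fin (d 0)), ∑ B : Finset (Fin (d 1)), a #A #B * b #Aᶜ #Bᶜ =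
      ∑ x ∈ antidiagonal (d 0), ∑ y ∈ antidiagonal (d 1),
        (d 0).choose x.1 * (d 1).choose y.1 * (a x.1 y.1 * b x.2 y.2) := by
    have sum_cols (s s' : ℕ) := sum_finset_apply_card_card_compl (ι := Fin (d 1))
      fun t t' => a s t * b s' t'
    rw [sum_finset_apply_card_card_compl fun s s' => ∑ B : Finset (Fin (d 1)), a s #B * b s' #Bᶜ]
    simp only [sum_cols, Fintype.card_fin, nsmul_eq_mul, mul_sum, mul_assoc]
  rw [MvPowerSeries.coeff_mul, coeff_doubleEGF, sum_subsets]
  simp only [coeff_doubleEGF, sum_div]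
  rw [sum_antidiagonal_finsupp_fin_two d fun x y =>
    a x.1 y.1 / (x.1 ! * y.1 !) * (b x.2 y.2 / (x.2 ! * y.2 !))]
  refine sum_congr rfl fun x hx => sum_congr rfl fun y hy => ?_
  rw [← mem_antidiagonal.1 hx, ← mem_antidiagonal.1 hy, Nat.cast_add_choose, Nat.cast_add_choose]
  have factorial_ne_zero (m : ℕ) : (m ! : K) ≠ 0 := Nat.cast_ne_zero.2 m.factorial_ne_zero
  field_simp [factorial_ne_zero]

end DoubleEGF

theorem ESmv_zero_eq_doubleEGF (S : Set ℕ) :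
    ESmv S 0 = doubleEGF fun n k => if n ∈ S ∧ k = 0 then 1 else 0 := by
  ext d
  have hd : d = Finsupp.single 0 (d 0) ↔ d 1 = 0 := by
    simp [Finsupp.ext_iff, Fin.forall_fin_two]
  simp only [MvPowerSeries.coeff_apply, ESmv, doubleEGF, hd, and_comm]
  split_ifs with h <;> simp [h]

theorem ESmv_one_eq_doubleEGF (S : Set ℕ) :
    ESmv S 1 = doubleEGF fun n k => if n = 0 ∧ k ∈ S then 1 else 0 := by
  ext d
  have hd : d = Finsupp.single 1 (d 1) ↔ d 0 = 0 := by
    simp [Finsupp.ext_iff, Fin.forall_fin_two]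
  simp only [MvPowerSeries.coeff_apply, ESmv, doubleEGF, hd]
  split_ifs with h <;> simp [h]

theorem ESmv_zero_mul_ESmv_one (S₁ S₂ : Set ℕ) :
    ESmv S₁ 0 * ESmv S₂ 1 = doubleEGF fun n k => if n ∈ S₁ ∧ k ∈ S₂ then 1 else 0 := by
  rw [ESmv_zero_eq_doubleEGF, ESmv_one_eq_doubleEGF, doubleEGF_mul]
  congr! with n k
  rw [Fintype.sum_eq_single univ, Fintype.sum_eq_single ∅]
  · simp [← ite_and, and_comm]
  · intro B hB
    simp [hB]
  · intro A hA
    simp [hA]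

theorem sum_sum_natCard_and_eq_and_eq {X ι κ : Type*} [Finite X] [Fintype ι] [Fintype κ]
    (P : X → Prop) (f : X → ι) (g : X → κ) :
    ∑ i, ∑ j, Nat.card {x // P x ∧ f x = i ∧ g x = j} = Nat.card {x // P x} := by
  cases nonempty_fintype X
  simp only [Nat.card_eq_fintype_card, Fintype.card_subtype]
  rw [← Fintype.sum_prod_type', card_eq_sum_card_fiberwise
    (f := fun x => (f x, g x)) (t := univ) fun _ _ => mem_coe.2 (mem_univ _)]
  simp only [filter_filter, Prod.ext_iff]

section Fibers

variable {α α' γ δ : Type*}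

/-- Every value taken by `f` is taken a number of times lying in `S`; for `f` the family of rows
of a matrix, this restricts the number of rows of each type. -/
def FiberCardsMem (S : Set ℕ) (f : α → γ) : Prop :=
  ∀ a, Nat.card {a' // f a' = f a} ∈ S

theorem FiberCardsMem.comp_equiv {S : Set ℕ} {f : α → γ} {g : α' → δ} (hf : FiberCardsMem S f)
    (e : α' ≃ α) (hfg : ∀ a b, f (e a) = f (e b) ↔ g a = g b) : FiberCardsMem S g := fun a => by
  rw [Nat.card_congr (e.subtypeEquiv (q := fun b => f b = f (e a)) fun b => (hfg b a).symm)]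
  exact hf (e a)

theorem natCard_fiber_eq_card {f : α → γ} {A : Finset α} {a : α} (hA : ∀ b, f b = f a ↔ b ∈ A) :
    Nat.card {b // f b = f a} = #A := by
  rw [Nat.card_congr (Equiv.subtypeEquivRight hA), Nat.card_eq_fintype_card, Fintype.card_coe]

theorem fiberCardsMem_iff_of_fiber [Fintype α] [DecidableEq α] {S : Set ℕ} {f : α → γ}
    {A : Finset α} {g : ↥Aᶜ → δ} (hA : A.Nonempty) (fiber : ∀ a ∈ A, ∀ b, f b = f a ↔ b ∈ A)
    (hg : ∀ a b : ↥Aᶜ, f a = f b ↔ g a = g b) :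
    FiberCardsMem S f ↔ #A ∈ S ∧ FiberCardsMem S g := by
  have card_off (a : ↥Aᶜ) : Nat.card {b // f b = f a} = Nat.card {b // g b = g a} := by
    have mem_compl_of_eq {b : α} (hb : f b = f a) : b ∈ Aᶜ :=
      mem_compl.2 fun hbA => mem_compl.1 a.2 <| (fiber b hbA a).1 hb.symm
    rw [← Nat.card_congr (Equiv.subtypeSubtypeEquivSubtype mem_compl_of_eq)]
    exact Nat.card_congr (Equiv.subtypeEquivRight fun b => hg b a)
  constructor
  · intro hf
    obtain ⟨a, ha⟩ := hA
    exact ⟨natCard_fiber_eq_card (fiber a ha) ▸ hf a, fun a => card_off a ▸ hf a⟩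
  · rintro ⟨hAS, hgS⟩ a
    by_cases ha : a ∈ A
    · rwa [natCard_fiber_eq_card (fiber a ha)]
    · exact card_off ⟨a, mem_compl.2 ha⟩ ▸ hgS _

end Fibers

section RestrictedLonesum

variable {α β α' β' : Type*} {S₁ S₂ : Set ℕ}

/-- Ferrers relations, i.e. `IsLonesum` over arbitrary index types: the rows, read as subsets
of `β`, form a chain. -/
def IsFerrers (M : α → β → Bool) : Prop :=
  ∀ ⦃i₁ i₂ j₁ j₂⦄, M i₁ j₁ = true → M i₂ j₂ = true → M i₁ j₂ = true ∨ M i₂ j₁ = true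

theorem isLonesum_iff_isFerrers {n k : ℕ} {M : Fin n → Fin k → Bool} :
    IsLonesum M ↔ IsFerrers M := by
  constructor
  · intro hM i₁ i₂ j₁ j₂ h₁ h₂
    by_contra! h
    refine hM i₁ i₂ j₁ j₂ ?_ ?_ (by simp_all) <;> rintro rfl <;> simp_all
  · rintro hM i₁ i₂ j₁ j₂ - - ⟨h₁, h₂, h₁₂, h₂₁⟩
    simpa [h₁₂, h₂₁] using hM h₁ h₂

theorem IsFerrers.flip {M : α → β → Bool} (hM : IsFerrers M) : IsFerrers (flip M) :=
  fun _ _ _ _ h₁ h₂ => (hM h₁ h₂).symm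

theorem IsFerrers.le_total {M : α → β → Bool} (hM : IsFerrers M) (i i' : α) :
    M i ≤ M i' ∨ M i' ≤ M i := by
  by_contra! h
  simp only [Pi.le_def, Bool.le_iff_imp, not_forall] at h
  obtain ⟨⟨j, hij, hi'j⟩, j', hi'j', hij'⟩ := h
  exact (hM hij hi'j').elim hij' hi'j

theorem IsFerrers.exists_greatest_row [Finite α] [Nonempty α] {M : α → β → Bool}
    (hM : IsFerrers M) : ∃ i, ∀ i', M i' ≤ M i :=
  Directed.finite_le (fun i i' => (hM.le_total i i').elim (fun h => ⟨i', h, le_rfl⟩)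
    fun h => ⟨i, le_rfl, h⟩) id

theorem IsFerrers.exists_least_row [Finite α] [Nonempty α] {M : α → β → Bool}
    (hM : IsFerrers M) : ∃ i, ∀ i', M i ≤ M i' :=
  Directed.finite_le (r := (· ≥ ·)) (fun i i' => (hM.le_total i i').elim
    (fun h => ⟨i, le_rfl, h⟩) fun h => ⟨i', h, le_rfl⟩) id

/-- The `(S₁, S₂)`-restricted lonesum matrices without all-zero rows and columns, over arbitrary
index types. -/
structure IsRestrictedLonesum (S₁ S₂ : Set ℕ) (M : α → β → Bool) : Prop where
  isFerrers : IsFerrers M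
  row_ne_zero : ∀ i, ∃ j, M i j = true
  col_ne_zero : ∀ j, ∃ i, M i j = true
  rows : FiberCardsMem S₁ M
  cols : FiberCardsMem S₂ (flip M)

theorem IsRestrictedLonesum.comp_equiv {M : α → β → Bool} (hM : IsRestrictedLonesum S₁ S₂ M)
    (e : α' ≃ α) (f : β' ≃ β) : IsRestrictedLonesum S₁ S₂ fun i j => M (e i) (f j) where
  isFerrers _ _ _ _ h₁ h₂ := hM.isFerrers h₁ h₂
  row_ne_zero i := f.exists_congr_left.2 <| by simpa using hM.row_ne_zero (e i)
  col_ne_zero j := e.exists_congr_left.2 <| by simpa using hM.col_ne_zero (f j)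
  rows := hM.rows.comp_equiv e fun i i' => by simp [funext_iff, f.forall_congr_left]
  cols := hM.cols.comp_equiv f fun j j' => by simp [funext_iff, flip, e.forall_congr_left]

theorem isRestrictedLonesum_fin_iff {n k : ℕ} (M : Fin n → Fin k → Bool) :
    IsRestrictedLonesum S₁ S₂ M ↔ IsLonesum M ∧
      (∀ i, ∃ j, M i j = true) ∧ (∀ j, ∃ i, M i j = true) ∧
      (∀ i : Fin n, Nat.card {i' : Fin n // M i' = M i} ∈ S₁) ∧
      (∀ j : Fin k, Nat.card {j' : Fin k // (fun i => M i j') = fun i => M i j} ∈ S₂) := by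
  rw [isLonesum_iff_isFerrers]
  exact ⟨fun ⟨hF, hrow, hcol, hrows, hcols⟩ => ⟨hF, hrow, hcol, hrows, hcols⟩,
    fun ⟨hF, hrow, hcol, hrows, hcols⟩ => ⟨hF, hrow, hcol, hrows, hcols⟩⟩

theorem lonesumCount_eq_natCard (S₁ S₂ : Set ℕ) (n k : ℕ) :
    lonesumCount S₁ S₂ n k =
      Nat.card {M : Fin n → Fin k → Bool // IsRestrictedLonesum S₁ S₂ M} :=
  Nat.card_congr <| Equiv.subtypeEquivRight fun M => (isRestrictedLonesum_fin_iff M).symm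

theorem IsRestrictedLonesum.nonempty_and_nonempty {M : α → β → Bool}
    (hM : IsRestrictedLonesum S₁ S₂ M)
    (h : Nonempty α ∨ Nonempty β) : Nonempty α ∧ Nonempty β :=
  h.elim (fun ⟨i⟩ => ⟨⟨i⟩, ⟨(hM.row_ne_zero i).choose⟩⟩)
    fun ⟨j⟩ => ⟨⟨(hM.col_ne_zero j).choose⟩, ⟨j⟩⟩

theorem natCard_isRestrictedLonesum [Fintype α] [Fintype β] (S₁ S₂ : Set ℕ) :
    Nat.card {M : α → β → Bool // IsRestrictedLonesum S₁ S₂ M} =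
      lonesumCount S₁ S₂ (Fintype.card α) (Fintype.card β) := by
  let e := (Fintype.equivFin α).arrowCongr ((Fintype.equivFin β).arrowCongr (Equiv.refl Bool))
  rw [lonesumCount_eq_natCard]
  refine Nat.card_congr (e.subtypeEquiv fun M => ⟨?_, ?_⟩)
  · exact fun hM => hM.comp_equiv (Fintype.equivFin α).symm (Fintype.equivFin β).symm
  · exact fun hM => by
      simpa [e, comp_def] using hM.comp_equiv (Fintype.equivFin α) (Fintype.equivFin β)

section Peeling

variable [Fintype α] [Fintype β]

/-- The rows of `M` without zero entries, peeled off first in the recursion. -/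
noncomputable def fullRows (M : α → β → Bool) : Finset α := {i | ∀ j, M i j = true}

/-- The columns of `M` supported on the full rows. If `M` is lonesum without all-zero columns,
these are the columns with the fewest ones. -/
noncomputable def leastCols (M : α → β → Bool) : Finset β :=
  {j | ∀ i, M i j = true → i ∈ fullRows M}

theorem mem_fullRows {M : α → β → Bool} {i : α} : i ∈ fullRows M ↔ ∀ j, M i j = true := by
  simp [fullRows]

theorem mem_leastCols {M : α → β → Bool} {j : β} :
    j ∈ leastCols M ↔ ∀ i, M i j = true → i ∈ fullRows M := by
  simp [leastCols]

theorem IsRestrictedLonesum.fullRows_nonempty [Nonempty α] {M : α → β → Bool}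
    (hM : IsRestrictedLonesum S₁ S₂ M) : (fullRows M).Nonempty := by
  obtain ⟨i, hi⟩ := hM.isFerrers.exists_greatest_row
  refine ⟨i, mem_fullRows.2 fun j => ?_⟩
  obtain ⟨i', hi'⟩ := hM.col_ne_zero j
  exact Bool.le_iff_imp.1 (hi i' j) hi'

theorem IsRestrictedLonesum.leastCols_nonempty [Nonempty β] {M : α → β → Bool}
    (hM : IsRestrictedLonesum S₁ S₂ M) : (leastCols M).Nonempty := by
  obtain ⟨j, hj⟩ := hM.isFerrers.flip.exists_least_row
  exact ⟨j, mem_leastCols.2 fun i hij => mem_fullRows.2 fun j' => Bool.le_iff_imp.1 (hj j' i) hij⟩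

variable [DecidableEq α] [DecidableEq β] {A : Finset α} {B : Finset β}

/-- The matrix which is `1` on the rows in `A`, `0` on the remaining entries of the columns
in `B`, and `N` on the remaining rows and columns: the matrix from which peeling off `A` and `B`
leaves `N`. -/
noncomputable def bordered (A : Finset α) (B : Finset β) (N : ↥Aᶜ → ↥Bᶜ → Bool) (i : α) (j : β) :
    Bool :=
  if hi : i ∈ A then true else if hj : j ∈ B then false
  else N ⟨i, mem_compl.2 hi⟩ ⟨j, mem_compl.2 hj⟩

section Bordered

variable {N : ↥Aᶜ → ↥Bᶜ → Bool}

theorem bordered_of_mem_left {i : α} (hi : i ∈ A) (j : β) : bordered A B N i j = true := by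
  simp [bordered, hi]

theorem bordered_eq_true_of_mem_right {i : α} {j : β} (hj : j ∈ B) :
    bordered A B N i j = true ↔ i ∈ A := by
  simp [bordered, hj]

theorem bordered_coe (i : ↥Aᶜ) (j : ↥Bᶜ) : bordered A B N i j = N i j := by
  simp [bordered, mem_compl.1 i.2, mem_compl.1 j.2]

theorem bordered_fullRows_leastCols (M : α → β → Bool) :
    bordered (fullRows M) (leastCols M) (fun i j => M i j) = M := by
  ext i j
  by_cases hi : i ∈ fullRows M
  · rw [bordered_of_mem_left hi, mem_fullRows.1 hi]
  by_cases hj : j ∈ leastCols M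
  · rw [Bool.eq_iff_iff, bordered_eq_true_of_mem_right hj]
    exact ⟨fun h => absurd h hi, mem_leastCols.1 hj i⟩
  · exact bordered_coe ⟨i, mem_compl.2 hi⟩ ⟨j, mem_compl.2 hj⟩

theorem fullRows_bordered (hB : B.Nonempty) : fullRows (bordered A B N) = A := by
  obtain ⟨j, hj⟩ := hB
  ext i
  exact mem_fullRows.trans
    ⟨fun h => (bordered_eq_true_of_mem_right hj).1 (h j), bordered_of_mem_left⟩

theorem coe_mem_leastCols_bordered_iff (hB : B.Nonempty) (j : ↥Bᶜ) :
    ↑j ∈ leastCols (bordered A B N) ↔ ∀ i, N i j ≠ true := by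
  rw [mem_leastCols, fullRows_bordered hB]
  constructor
  · intro h i hij
    exact mem_compl.1 i.2 <| h i <| (bordered_coe i j).trans hij
  · intro h i hij
    by_contra hi
    exact h ⟨i, mem_compl.2 hi⟩ ((bordered_coe ⟨i, mem_compl.2 hi⟩ j).symm.trans hij)

theorem leastCols_bordered_eq_iff (hB : B.Nonempty) :
    leastCols (bordered A B N) = B ↔ ∀ j, ∃ i, N i j = true := by
  constructor
  · intro h j
    by_contra! hj
    exact mem_compl.1 j.2 <| h.le <| (coe_mem_leastCols_bordered_iff hB j).2 hj
  · intro h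
    ext j
    constructor
    · intro hj
      by_contra hjB
      obtain ⟨i, hi⟩ := h ⟨j, mem_compl.2 hjB⟩
      exact (coe_mem_leastCols_bordered_iff hB ⟨j, mem_compl.2 hjB⟩).1 hj i hi
    · intro hj
      rw [mem_leastCols, fullRows_bordered hB]
      exact fun i => (bordered_eq_true_of_mem_right hj).1

theorem isFerrers_bordered_iff : IsFerrers (bordered A B N) ↔ IsFerrers N := by
  constructor
  · intro h i₁ i₂ j₁ j₂
    simpa only [bordered_coe] using @h i₁ i₂ j₁ j₂
  · intro h i₁ i₂ j₁ j₂ h₁ h₂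
    by_cases hi₁ : i₁ ∈ A
    · exact .inl (bordered_of_mem_left hi₁ j₂)
    by_cases hi₂ : i₂ ∈ A
    · exact .inr (bordered_of_mem_left hi₂ j₁)
    have hj₁ : j₁ ∉ B := fun hj => hi₁ ((bordered_eq_true_of_mem_right hj).1 h₁)
    have hj₂ : j₂ ∉ B := fun hj => hi₂ ((bordered_eq_true_of_mem_right hj).1 h₂)
    simp only [bordered, hi₁, hi₂, hj₁, hj₂, dite_false] at h₁ h₂ ⊢
    exact h h₁ h₂

theorem forall_exists_bordered_row_iff (hB : B.Nonempty) :
    (∀ i, ∃ j, bordered A B N i j = true) ↔ ∀ i, ∃ j, N i j = true := by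
  constructor
  · intro h i
    obtain ⟨j, hj⟩ := h i
    have hjB : j ∉ B := fun hjB => mem_compl.1 i.2 ((bordered_eq_true_of_mem_right hjB).1 hj)
    exact ⟨⟨j, mem_compl.2 hjB⟩, (bordered_coe i ⟨j, mem_compl.2 hjB⟩).symm.trans hj⟩
  · intro h i
    by_cases hi : i ∈ A
    · exact ⟨hB.choose, bordered_of_mem_left hi _⟩
    · obtain ⟨j, hj⟩ := h ⟨i, mem_compl.2 hi⟩
      exact ⟨j, (bordered_coe ⟨i, mem_compl.2 hi⟩ j).trans hj⟩

theorem bordered_row_eq_iff (i i' : ↥Aᶜ) :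
    bordered A B N i = bordered A B N i' ↔ N i = N i' := by
  constructor
  · intro h
    ext j
    simpa only [bordered_coe] using congrFun h j
  · intro h
    ext j
    simp only [bordered, mem_compl.1 i.2, mem_compl.1 i'.2, Subtype.coe_eta, h]

theorem bordered_col_eq_iff (j j' : ↥Bᶜ) :
    flip (bordered A B N) j = flip (bordered A B N) j' ↔ flip N j = flip N j' := by
  constructor
  · intro h
    ext i
    simpa only [flip, bordered_coe] using congrFun h i
  · intro h
    ext i
    have hN (i) : N i j = N i j' := congrFun h i
    simp only [flip, bordered, mem_compl.1 j.2, mem_compl.1 j'.2, Subtype.coe_eta, hN]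

theorem fiberCardsMem_bordered_iff (hA : A.Nonempty) (hB : B.Nonempty) :
    FiberCardsMem S₁ (bordered A B N) ↔ #A ∈ S₁ ∧ FiberCardsMem S₁ N := by
  refine fiberCardsMem_iff_of_fiber hA (fun i hi i' => ?_) bordered_row_eq_iff
  have row_eq_one : bordered A B N i = fun _ => true := funext (bordered_of_mem_left hi)
  rw [row_eq_one, funext_iff, ← mem_fullRows, fullRows_bordered hB]

theorem fiberCardsMem_flip_bordered_iff (hB : B.Nonempty) (hN : ∀ j, ∃ i, N i j = true) :
    FiberCardsMem S₂ (flip (bordered A B N)) ↔ #B ∈ S₂ ∧ FiberCardsMem S₂ (flip N) := by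
  refine fiberCardsMem_iff_of_fiber hB (fun j hj j' => ⟨fun h => ?_, fun hj' => ?_⟩)
    bordered_col_eq_iff
  · rw [← (leastCols_bordered_eq_iff hB).2 hN, mem_leastCols, fullRows_bordered hB]
    exact fun i hi => (bordered_eq_true_of_mem_right hj).1 ((congrFun h i).symm.trans hi)
  · ext i
    rw [Bool.eq_iff_iff]
    exact (bordered_eq_true_of_mem_right hj').trans (bordered_eq_true_of_mem_right hj).symm

theorem isRestrictedLonesum_bordered_iff (hA : A.Nonempty) (hB : B.Nonempty) :
    IsRestrictedLonesum S₁ S₂ (bordered A B N) ∧ leastCols (bordered A B N) = B ↔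
      (#A ∈ S₁ ∧ #B ∈ S₂) ∧ IsRestrictedLonesum S₁ S₂ N := by
  rw [leastCols_bordered_eq_iff hB]
  constructor
  · rintro ⟨⟨hF, hrow, -, hrows, hcols⟩, hN⟩
    rw [fiberCardsMem_bordered_iff hA hB] at hrows
    rw [fiberCardsMem_flip_bordered_iff hB hN] at hcols
    exact ⟨⟨hrows.1, hcols.1⟩, isFerrers_bordered_iff.1 hF,
      (forall_exists_bordered_row_iff hB).1 hrow, hN, hrows.2, hcols.2⟩
  · rintro ⟨⟨hAS, hBS⟩, hF, hrow, hN, hrows, hcols⟩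
    exact ⟨⟨isFerrers_bordered_iff.2 hF, (forall_exists_bordered_row_iff hB).2 hrow,
      fun j => ⟨hA.choose, bordered_of_mem_left hA.choose_spec j⟩,
      (fiberCardsMem_bordered_iff hA hB).2 ⟨hAS, hrows⟩,
      (fiberCardsMem_flip_bordered_iff hB hN).2 ⟨hBS, hcols⟩⟩, hN⟩

end Bordered

/-- Removing the rows in `A` and the columns in `B` identifies the restricted lonesum matrices with
full rows `A` and least columns `B` with the smaller restricted lonesum matrices, provided that
the sizes of `A` and `B` are allowed; otherwise both sides are empty. -/
noncomputable def borderedEquiv (hA : A.Nonempty) (hB : B.Nonempty) :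
    {M : α → β → Bool // IsRestrictedLonesum S₁ S₂ M ∧ fullRows M = A ∧ leastCols M = B} ≃
      {N : ↥Aᶜ → ↥Bᶜ → Bool // (#A ∈ S₁ ∧ #B ∈ S₂) ∧ IsRestrictedLonesum S₁ S₂ N} where
  toFun M := ⟨fun i j => M.1 i j, by
    obtain ⟨M, hM, rfl, rfl⟩ := M
    rw [← isRestrictedLonesum_bordered_iff hA hB, bordered_fullRows_leastCols]
    exact ⟨hM, rfl⟩⟩
  invFun N := ⟨bordered A B N.1,
    have h := (isRestrictedLonesum_bordered_iff hA hB).2 N.2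
    ⟨h.1, fullRows_bordered hB, h.2⟩⟩
  left_inv := by
    rintro ⟨M, -, rfl, rfl⟩
    exact Subtype.ext (bordered_fullRows_leastCols M)
  right_inv N := Subtype.ext <| funext₂ bordered_coe

theorem natCard_fullRows_leastCols_eq (hA : A.Nonempty) (hB : B.Nonempty) :
    Nat.card {M : α → β → Bool //
        IsRestrictedLonesum S₁ S₂ M ∧ fullRows M = A ∧ leastCols M = B} =
      if #A ∈ S₁ ∧ #B ∈ S₂ then lonesumCount S₁ S₂ #Aᶜ #Bᶜ else 0 := by
  rw [Nat.card_congr (borderedEquiv hA hB)]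
  split_ifs with h
  · simp only [h, true_and, natCard_isRestrictedLonesum, Fintype.card_coe]
  · exact Nat.card_eq_zero.2 <| .inl ⟨fun N => h N.2.1⟩

end Peeling

theorem lonesumCount_zero_zero (S₁ S₂ : Set ℕ) : lonesumCount S₁ S₂ 0 0 = 1 := by
  rw [lonesumCount, Nat.card_eq_one_iff_unique]
  exact ⟨inferInstance, ⟨⟨fun i => i.elim0, by simp [IsLonesum]⟩⟩⟩

theorem lonesumCount_eq_sum (h₁ : 0 ∉ S₁) (h₂ : 0 ∉ S₂) {n k : ℕ} (hnk : ¬(n = 0 ∧ k = 0)) :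
    lonesumCount S₁ S₂ n k = ∑ A : Finset (Fin n), ∑ B : Finset (Fin k),
      if #A ∈ S₁ ∧ #B ∈ S₂ then lonesumCount S₁ S₂ #Aᶜ #Bᶜ else 0 := by
  have nonempty : Nonempty (Fin n) ∨ Nonempty (Fin k) := by
    simp only [← Fin.pos_iff_nonempty]
    lia
  rw [lonesumCount_eq_natCard, ← sum_sum_natCard_and_eq_and_eq _ fullRows leastCols]
  refine sum_congr rfl fun A _ => sum_congr rfl fun B _ => ?_
  by_cases hAB : A.Nonempty ∧ B.Nonempty
  · exact natCard_fullRows_leastCols_eq hAB.1 hAB.2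
  · rw [if_neg, Nat.card_eq_zero]
    · refine .inl ⟨fun ⟨M, hM, hA, hB⟩ => hAB ?_⟩
      obtain ⟨_, _⟩ := hM.nonempty_and_nonempty nonempty
      exact ⟨hA ▸ hM.fullRows_nonempty, hB ▸ hM.leastCols_nonempty⟩
    · rintro ⟨hA, hB⟩
      refine hAB ⟨?_, ?_⟩ <;> refine nonempty_iff_ne_empty.2 ?_ <;> rintro rfl
      · exact h₁ hA
      · exact h₂ hB

theorem lonesumCount_eq_ite_add_sum (h₁ : 0 ∉ S₁) (h₂ : 0 ∉ S₂) (n k : ℕ) :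
    (lonesumCount S₁ S₂ n k : ℚ) = (if n = 0 ∧ k = 0 then 1 else 0) +
      ∑ A : Finset (Fin n), ∑ B : Finset (Fin k),
        (if #A ∈ S₁ ∧ #B ∈ S₂ then 1 else 0) * (lonesumCount S₁ S₂ #Aᶜ #Bᶜ : ℚ) := by
  by_cases hnk : n = 0 ∧ k = 0
  · obtain ⟨rfl, rfl⟩ := hnk
    have card_eq_zero (A : Finset (Fin 0)) : #A = 0 := by rw [eq_empty_of_isEmpty A, card_empty]
    simp [lonesumCount_zero_zero, card_eq_zero, h₁]
  · rw [lonesumCount_eq_sum h₁ h₂ hnk, if_neg hnk, zero_add]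
    simp only [Nat.cast_sum, Nat.cast_ite, Nat.cast_zero, ite_mul, one_mul, zero_mul]

end RestrictedLonesum

/-- the double EGF of `(S₁,S₂)`-restricted lonesum matrices without
all-zero rows and columns is `1 / (1 - E_{S₁}(x) E_{S₂}(y))`. -/
theorem restricted_lonesum_degf (S₁ S₂ : Set ℕ) (h₁ : 0 ∉ S₁) (h₂ : 0 ∉ S₂) :
    lonesumDEGF S₁ S₂ * (1 - ESmv S₁ 0 * ESmv S₂ 1) = 1 := by
  have recursion : lonesumDEGF S₁ S₂ = 1 + ESmv S₁ 0 * ESmv S₂ 1 * lonesumDEGF S₁ S₂ :=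
    calc
      lonesumDEGF S₁ S₂ = doubleEGF fun n k => (lonesumCount S₁ S₂ n k : ℚ) := rfl
      _ = 1 + ESmv S₁ 0 * ESmv S₂ 1 * doubleEGF fun n k => (lonesumCount S₁ S₂ n k : ℚ) := by
        rw [ESmv_zero_mul_ESmv_one, doubleEGF_mul, ← doubleEGF_ite_eq_one, ← doubleEGF_add]
        exact congrArg doubleEGF <| funext₂ <| lonesumCount_eq_ite_add_sum h₁ h₂
  linear_combination recursion
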